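/- arXiv:2107.10488 — 4 statements merged into one kernel-verified Lean document; each statement's English description precedes it below -/
import Mathlib

section
/- Let X = (V,E,T) be an (s,k,K)-two-layer system with weight function w. Let A ⊆ E and U ⊆ V, and for 0 ≤ i ≤ k define A_U^i = {τ ∈ A : |U ∩ τ| = i}. Then Σ_{i=1}^{k} i·w(A_U^i) ≤ Σ_{v∈U} m_v(A_v) ≤ (s−1)·Σ_{i=1}^{k} i·w(A_U^i). In particular, Σ_{v∈U} m_v(A_v) ≤ (s−1)·k·w(A). -/
open Finset

noncomputable section
open scoped Classical

/-- Sum of edge weights between two vertex sets (over ordered pairs),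
i.e. `m(U₁,U₂)` for a weighted graph given by the symmetric kernel `m`. -/
def pairW {α : Type*} (m : α → α → ℝ) (U₁ U₂ : Finset α) : ℝ :=
  ∑ u ∈ U₁, ∑ v ∈ U₂, m u v

/-- Weighted degree `m(v)` of a vertex, relative to the vertex set `vs` of the graph. -/
def degOn {α : Type*} (m : α → α → ℝ) (vs : Finset α) (v : α) : ℝ :=
  ∑ u ∈ vs, m v u

/-- Weight `m(U)` of a set of vertices. -/
def vertOn {α : Type*} (m : α → α → ℝ) (vs : Finset α) (U : Finset α) : ℝ :=
  ∑ v ∈ U, degOn m vs v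

/-- The (generalized) Cheeger constant
`h = min over nonempty proper U ⊆ vs of m(U, vs∖U)·m(vs)/(m(U)·m(vs∖U))`. -/
def cheegerOn {α : Type*} (m : α → α → ℝ) (vs : Finset α) : ℝ :=
  sInf { x : ℝ | ∃ U : Finset α, U ⊆ vs ∧ U.Nonempty ∧ U ≠ vs ∧
    x = pairW m U (vs \ U) * vertOn m vs vs / (vertOn m vs U * vertOn m vs (vs \ U)) }

/-- A weighted graph is a `λ`-expander if `1 - h ≤ λ`. -/
def IsExpanderOn {α : Type*} (m : α → α → ℝ) (vs : Finset α) (lam : ℝ) : Prop :=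
  1 - cheegerOn m vs ≤ lam

/-- The ℓ² inner product `⟨φ,ψ⟩ = Σ_v m(v) φ(v) ψ(v)` with respect to the vertex weights. -/
def iprodK {α : Type*} [Fintype α] (m : α → α → ℝ) (φ ψ : α → ℝ) : ℝ :=
  ∑ v, (∑ u, m v u) * (φ v * ψ v)

/-- The random walk operator `Mφ(v) = (1/m(v)) Σ_u m({u,v}) φ(u)`. -/
def walkK {α : Type*} [Fintype α] (m : α → α → ℝ) (φ : α → ℝ) (v : α) : ℝ :=
  (∑ u, m v u * φ u) / (∑ u, m v u)

/-- An `(s,k,K)`-two-layer system `X = (V,E,T)`:  `E` is a set of `k`-element subsets of `V`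
covering `V`; `T` is a set of `K`-element subsets of `E` covering `E`; and for every `σ ∈ T`
and every vertex `v ∈ σ` (meaning `v ∈ τ` for some `τ ∈ σ`), `2 ≤ |{τ ∈ σ : v ∈ τ}| ≤ s`.
A positive weight function `w` on `T` is part of the data. -/
structure TwoLayer (V : Type*) [Fintype V] [DecidableEq V] where
  s : ℕ
  k : ℕ
  K : ℕ
  E : Finset (Finset V)
  T : Finset (Finset (Finset V))
  w0 : Finset (Finset V) → ℝ
  w0_pos : ∀ σ ∈ T, 0 < w0 σ
  card_of_mem_E : ∀ τ ∈ E, τ.card = k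
  cover_V : ∀ v : V, ∃ τ ∈ E, v ∈ τ
  card_of_mem_T : ∀ σ ∈ T, σ.card = K
  sub_of_mem_T : ∀ σ ∈ T, ∀ τ ∈ σ, τ ∈ E
  cover_E : ∀ τ ∈ E, ∃ σ ∈ T, τ ∈ σ
  deg_lb : ∀ σ ∈ T, ∀ v : V, (∃ τ ∈ σ, v ∈ τ) → 2 ≤ (σ.filter (fun τ => v ∈ τ)).card
  deg_ub : ∀ σ ∈ T, ∀ v : V, (∃ τ ∈ σ, v ∈ τ) → (σ.filter (fun τ => v ∈ τ)).card ≤ s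

namespace TwoLayer

variable {V : Type*} [Fintype V] [DecidableEq V] (X : TwoLayer V)

/-- The induced weight `w(τ) = Σ_{σ ∈ T, τ ∈ σ} w(σ)` of `τ ∈ E`. -/
def wE (τ : Finset V) : ℝ := ∑ σ ∈ X.T.filter (fun σ => τ ∈ σ), X.w0 σ

/-- The induced weight `w(v) = Σ_{σ ∈ T, v ∈ σ} w(σ)` of a vertex `v ∈ V`. -/
def wV (v : V) : ℝ := ∑ σ ∈ X.T.filter (fun σ => ∃ τ ∈ σ, v ∈ τ), X.w0 σ

/-- `w(A)` for `A ⊆ E`. -/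
def wSet (A : Finset (Finset V)) : ℝ := ∑ τ ∈ A, X.wE τ

/-- `w(U)` for `U ⊆ V`. -/
def wVSet (U : Finset V) : ℝ := ∑ v ∈ U, X.wV v

/-- `w(S)` for `S ⊆ T`. -/
def wT (S : Finset (Finset (Finset V))) : ℝ := ∑ σ ∈ S, X.w0 σ

/-- The weight kernel of the ground graph:
`m_gr({u,v}) = Σ_{τ ∈ E, u,v ∈ τ} w(τ)` for `u ≠ v`. -/
def mGr (u v : V) : ℝ :=
  if u = v then 0 else ∑ τ ∈ X.E.filter (fun τ => u ∈ τ ∧ v ∈ τ), X.wE τ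

/-- `E_v = {τ ∈ E : v ∈ τ}`, the vertex set of the link of `v`. -/
def Ev (v : V) : Finset (Finset V) := X.E.filter (fun τ => v ∈ τ)

/-- The weight kernel of the link of `v`:
`m_v({τ,τ'}) = Σ_{σ ∈ T, τ,τ' ∈ σ} w(σ)` for `τ ≠ τ'` in `E_v`. -/
def mLk (v : V) (τ τ' : Finset V) : ℝ :=
  if τ ≠ τ' ∧ τ ∈ X.Ev v ∧ τ' ∈ X.Ev v then
    ∑ σ ∈ X.T.filter (fun σ => τ ∈ σ ∧ τ' ∈ σ), X.w0 σ
  else 0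

/-- `m_v(B)` for a set `B ⊆ E_v` of vertices of the link of `v`. -/
def mLkSet (v : V) (B : Finset (Finset V)) : ℝ := vertOn (X.mLk v) (X.Ev v) B

/-- `τ ↔ τ'` : `τ,τ' ∈ E` are disjoint and contained in a common `σ ∈ T`. -/
def nintAdj (τ τ' : Finset V) : Prop :=
  τ ∈ X.E ∧ τ' ∈ X.E ∧ τ ∩ τ' = ∅ ∧ ∃ σ ∈ X.T, τ ∈ σ ∧ τ' ∈ σ

/-- The weight kernel of the non-intersecting graph. -/
def mNint (τ τ' : Finset V) : ℝ :=
  if X.nintAdj τ τ' then ∑ σ ∈ X.T.filter (fun σ => τ ∈ σ ∧ τ' ∈ σ), X.w0 σ else 0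

/-- The set of vertices that are `δ`-large with respect to `A ⊆ E`, i.e. those with
`m_v(A_v)/m_v(E_v) ≥ δ`. -/
def VLarge (A : Finset (Finset V)) (δ : ℝ) : Finset V :=
  Finset.univ.filter (fun v => δ ≤ X.mLkSet v (A ∩ X.Ev v) / X.mLkSet v (X.Ev v))

/-- `|{τ' ∈ σ : τ ↔ τ'}|`. -/
def nintCount (τ : Finset V) (σ : Finset (Finset V)) : ℕ :=
  (σ.filter (fun τ' => X.nintAdj τ τ')).card

/-- The set of values `|{τ' ∈ σ : τ ↔ τ'}|` over `τ ∈ E` and `σ ∈ T` with `τ ∈ σ`. -/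
def QSet : Set ℕ := { n | ∃ τ ∈ X.E, ∃ σ ∈ X.T, τ ∈ σ ∧ n = X.nintCount τ σ }

/-- `Q_nint^max`. -/
def Qmax : ℕ := sSup X.QSet

/-- `Q_nint^min`. -/
def Qmin : ℕ := sInf X.QSet

/-- The regularity constant `R_nint = Q_nint^min / Q_nint^max`. -/
def Rnint : ℝ := (X.Qmin : ℝ) / (X.Qmax : ℝ)

end TwoLayer

/-! In the link of `v`, each `σ ∈ T` containing `τ ∈ E_v` joins `τ` to the other members of
`{τ' ∈ σ : v ∈ τ'}`, so `m_v(τ) = Σ_{σ ∋ τ} (|{τ' ∈ σ : v ∈ τ'}| - 1) w(σ)`, which lies between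
`w(τ)` and `(s - 1) w(τ)`. Summing over `τ ∈ A_v` and then over `v ∈ U`, each `τ ∈ A` is counted
`|U ∩ τ|` times, and grouping the `τ` by this multiplicity gives `Σ_i i · w(A_U^i)`. -/

section DoubleCounting

variable {ι R : Type*} [Semiring R]

theorem sum_Icc_one_mul_sum_filter_eq {A : Finset ι} {f : ι → ℕ} {k : ℕ}
    (hf : ∀ x ∈ A, f x ≤ k) (g : ι → R) :
    ∑ i ∈ Icc 1 k, (i : R) * ∑ x ∈ A with f x = i, g x = ∑ x ∈ A, (f x : R) * g x := by
  have sum_Icc_ite (x : ι) (hx : x ∈ A) :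
      ∑ i ∈ Icc 1 k, (if f x = i then (i : R) * g x else 0) = (f x : R) * g x := by
    rw [sum_ite_eq]
    split_ifs with hmem
    · rfl
    · have hzero : f x = 0 := by
        have := hf x hx
        rw [mem_Icc] at hmem
        omega
      simp [hzero]
  simp_rw [mul_sum, sum_filter]
  rw [sum_comm]
  exact sum_congr rfl sum_Icc_ite

theorem sum_sum_filter_mem_eq_sum_card_inter_mul {V : Type*} [DecidableEq V]
    (U : Finset V) (A : Finset (Finset V)) (g : Finset V → R) :
    ∑ v ∈ U, ∑ τ ∈ A with v ∈ τ, g τ = ∑ τ ∈ A, ((U ∩ τ).card : R) * g τ := by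
  simp_rw [sum_filter]
  rw [sum_comm]
  refine sum_congr rfl fun τ _ => ?_
  rw [← sum_filter, sum_const, nsmul_eq_mul, filter_mem_eq_inter]

end DoubleCounting

namespace TwoLayer

variable {V : Type*} [Fintype V] [DecidableEq V] (X : TwoLayer V)
variable {v : V} {τ : Finset V} {σ A B : Finset (Finset V)}

theorem mem_Ev : τ ∈ X.Ev v ↔ τ ∈ X.E ∧ v ∈ τ := mem_filter

theorem inter_Ev_eq_filter (hA : A ⊆ X.E) (v : V) : A ∩ X.Ev v = A.filter (fun τ => v ∈ τ) := by
  rw [Ev, inter_filter, inter_eq_left.2 hA]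

theorem wE_nonneg (τ : Finset V) : 0 ≤ X.wE τ :=
  sum_nonneg fun σ hσ => (X.w0_pos σ (mem_filter.1 hσ).1).le

theorem two_le_s (v : V) : 2 ≤ X.s := by
  obtain ⟨τ, hτ, hv⟩ := X.cover_V v
  obtain ⟨σ, hσ, hτσ⟩ := X.cover_E τ hτ
  exact (X.deg_lb σ hσ v ⟨τ, hτσ, hv⟩).trans (X.deg_ub σ hσ v ⟨τ, hτσ, hv⟩)

theorem card_inter_le_k (hτ : τ ∈ X.E) (U : Finset V) : (U ∩ τ).card ≤ X.k :=
  (card_le_card inter_subset_right).trans_eq (X.card_of_mem_E τ hτ)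

theorem s_sub_one_mul_card_inter_le (hτ : τ ∈ X.E) (U : Finset V) :
    ((X.s : ℝ) - 1) * ((U ∩ τ).card : ℝ) ≤ ((X.s : ℝ) - 1) * (X.k : ℝ) := by
  -- `s - 1` may be negative only when `V`, and hence `τ`, is empty.
  rcases τ.eq_empty_or_nonempty with rfl | ⟨v, -⟩
  · simp [← X.card_of_mem_E ∅ hτ]
  · have hs : (2 : ℝ) ≤ X.s := mod_cast X.two_le_s v
    have hcard : ((U ∩ τ).card : ℝ) ≤ X.k := mod_cast X.card_inter_le_k hτ U
    exact mul_le_mul_of_nonneg_left hcard (by linarith)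

theorem mLk_eq_sum_ite (hτ : τ ∈ X.Ev v) {τ' : Finset V} (hτ' : τ' ∈ X.Ev v) :
    X.mLk v τ τ' = ∑ σ ∈ X.T with τ ∈ σ, if τ' ∈ σ.erase τ then X.w0 σ else 0 := by
  rw [mLk, ← sum_filter, filter_filter]
  by_cases hne : τ = τ'
  · simp [hne]
  · simp [hne, Ne.symm hne, hτ, hτ']

theorem filter_Ev_mem_erase (hσ : σ ∈ X.T) :
    (X.Ev v).filter (fun τ' => τ' ∈ σ.erase τ) = (σ.filter (fun τ' => v ∈ τ')).erase τ := by
  ext τ'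
  have := X.sub_of_mem_T σ hσ τ'
  simp only [mem_Ev, mem_filter, mem_erase]
  tauto

theorem degOn_mLk_eq_sum (hτ : τ ∈ X.Ev v) :
    degOn (X.mLk v) (X.Ev v) τ =
      ∑ σ ∈ X.T with τ ∈ σ, (((σ.filter (fun τ' => v ∈ τ')).card : ℝ) - 1) * X.w0 σ := by
  rw [degOn, sum_congr rfl fun τ' hτ' => X.mLk_eq_sum_ite hτ hτ', sum_comm]
  refine sum_congr rfl fun σ hσ => ?_
  obtain ⟨hσT, hτσ⟩ := mem_filter.1 hσ
  have hmem : τ ∈ σ.filter (fun τ' => v ∈ τ') := mem_filter.2 ⟨hτσ, (X.mem_Ev.1 hτ).2⟩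
  rw [← sum_filter, sum_const, nsmul_eq_mul, X.filter_Ev_mem_erase hσT,
    cast_card_erase_of_mem hmem]

theorem wE_le_degOn_mLk (hτ : τ ∈ X.Ev v) : X.wE τ ≤ degOn (X.mLk v) (X.Ev v) τ := by
  rw [X.degOn_mLk_eq_sum hτ, wE]
  refine sum_le_sum fun σ hσ => ?_
  obtain ⟨hσT, hτσ⟩ := mem_filter.1 hσ
  have hdeg : (2 : ℝ) ≤ (σ.filter (fun τ' => v ∈ τ')).card :=
    mod_cast X.deg_lb σ hσT v ⟨τ, hτσ, (X.mem_Ev.1 hτ).2⟩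
  exact le_mul_of_one_le_left (X.w0_pos σ hσT).le (by linarith)

theorem degOn_mLk_le_s_sub_one_mul_wE (hτ : τ ∈ X.Ev v) :
    degOn (X.mLk v) (X.Ev v) τ ≤ ((X.s : ℝ) - 1) * X.wE τ := by
  rw [X.degOn_mLk_eq_sum hτ, wE, mul_sum]
  refine sum_le_sum fun σ hσ => ?_
  obtain ⟨hσT, hτσ⟩ := mem_filter.1 hσ
  have hdeg : ((σ.filter (fun τ' => v ∈ τ')).card : ℝ) ≤ X.s :=
    mod_cast X.deg_ub σ hσT v ⟨τ, hτσ, (X.mem_Ev.1 hτ).2⟩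
  exact mul_le_mul_of_nonneg_right (by linarith) (X.w0_pos σ hσT).le

theorem wSet_le_mLkSet (hB : B ⊆ X.Ev v) : X.wSet B ≤ X.mLkSet v B :=
  sum_le_sum fun _ hτ => X.wE_le_degOn_mLk (hB hτ)

theorem mLkSet_le_s_sub_one_mul_wSet (hB : B ⊆ X.Ev v) :
    X.mLkSet v B ≤ ((X.s : ℝ) - 1) * X.wSet B := by
  rw [wSet, mul_sum]
  exact sum_le_sum fun _ hτ => X.degOn_mLk_le_s_sub_one_mul_wE (hB hτ)

theorem sum_wSet_inter_Ev (hA : A ⊆ X.E) (U : Finset V) :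
    ∑ v ∈ U, X.wSet (A ∩ X.Ev v) = ∑ τ ∈ A, ((U ∩ τ).card : ℝ) * X.wE τ := by
  simp_rw [X.inter_Ev_eq_filter hA]
  exact sum_sum_filter_mem_eq_sum_card_inter_mul U A X.wE

theorem sum_Icc_mul_wSet_filter_card_inter (hA : A ⊆ X.E) (U : Finset V) :
    ∑ i ∈ Icc 1 X.k, (i : ℝ) * X.wSet (A.filter (fun τ => (U ∩ τ).card = i)) =
      ∑ v ∈ U, X.wSet (A ∩ X.Ev v) := by
  rw [X.sum_wSet_inter_Ev hA]
  exact sum_Icc_one_mul_sum_filter_eq (fun τ hτ => X.card_inter_le_k (hA hτ) U) X.wE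

theorem s_sub_one_mul_sum_wSet_inter_Ev_le (hA : A ⊆ X.E) (U : Finset V) :
    ((X.s : ℝ) - 1) * ∑ v ∈ U, X.wSet (A ∩ X.Ev v) ≤ ((X.s : ℝ) - 1) * (X.k : ℝ) * X.wSet A := by
  rw [X.sum_wSet_inter_Ev hA, wSet, mul_sum, mul_sum]
  refine sum_le_sum fun τ hτ => ?_
  rw [← mul_assoc]
  exact mul_le_mul_of_nonneg_right (X.s_sub_one_mul_card_inter_le (hA hτ) U) (X.wE_nonneg τ)

end TwoLayer

/-- Proposition 2.8: for `A ⊆ E` and `U ⊆ V`, with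
`A_U^i = {τ ∈ A : |U ∩ τ| = i}`,
`Σ_{i=1}^k i·w(A_U^i) ≤ Σ_{v ∈ U} m_v(A_v) ≤ (s-1)·Σ_{i=1}^k i·w(A_U^i)`;
in particular `Σ_{v ∈ U} m_v(A_v) ≤ (s-1)·k·w(A)`. -/
theorem stmt3 {V : Type*} [Fintype V] [DecidableEq V] (X : TwoLayer V)
    (A : Finset (Finset V)) (hA : A ⊆ X.E) (U : Finset V) :
    ((∑ i ∈ Finset.Icc 1 X.k, (i : ℝ) * X.wSet (A.filter (fun τ => (U ∩ τ).card = i)))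
        ≤ ∑ v ∈ U, X.mLkSet v (A ∩ X.Ev v) ∧
      (∑ v ∈ U, X.mLkSet v (A ∩ X.Ev v))
        ≤ ((X.s : ℝ) - 1) *
            ∑ i ∈ Finset.Icc 1 X.k, (i : ℝ) * X.wSet (A.filter (fun τ => (U ∩ τ).card = i))) ∧
    (∑ v ∈ U, X.mLkSet v (A ∩ X.Ev v)) ≤ ((X.s : ℝ) - 1) * (X.k : ℝ) * X.wSet A := by
  have lower : ∑ v ∈ U, X.wSet (A ∩ X.Ev v) ≤ ∑ v ∈ U, X.mLkSet v (A ∩ X.Ev v) :=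
    sum_le_sum fun _ _ => X.wSet_le_mLkSet inter_subset_right
  have upper : ∑ v ∈ U, X.mLkSet v (A ∩ X.Ev v) ≤
      ((X.s : ℝ) - 1) * ∑ v ∈ U, X.wSet (A ∩ X.Ev v) := by
    rw [mul_sum]
    exact sum_le_sum fun _ _ => X.mLkSet_le_s_sub_one_mul_wSet inter_subset_right
  rw [X.sum_Icc_mul_wSet_filter_card_inter hA]
  exact ⟨⟨lower, upper⟩, upper.trans (X.s_sub_one_mul_sum_wSet_inter_Ev_le hA U)⟩
end
end

section
/- Let X = (V,E,T) be an (s,k,K)-two-layer system and let C ⊆ 𝔽_p^V be a linear code modelled over X via constraints 𝓔 and linear dependencies 𝓣. Assume X has the ((δ,α),ε₀)-unique neighbor expansion property. If c ∈ 𝔽_p^V is such that for some 0 < ε < ε₀ one has w(A(c))/w(E) ≤ ε and A(c) is (δ,α)-locally small, then c ∈ C. -/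
open Finset

noncomputable section
open scoped Classical

/-- The support of a constraint (or of a word) `e ∈ 𝔽_p^V`. -/
def suppF {V F : Type*} [Fintype V] [DecidableEq V] [Zero F] (e : V → F) : Finset V :=
  Finset.univ.filter (fun v => e v ≠ 0)

/-- The dot product `e · c = Σ_v e(v) c(v)`. -/
def dotF {V F : Type*} [Fintype V] [NonUnitalNonAssocSemiring F] (e c : V → F) : F :=
  ∑ v, e v * c v

/-- The normalized weighted norm `‖x‖ = (1/w(V)) Σ_{v, x(v) ≠ 0} w(v)` on `𝔽_p^V`. -/
def TwoLayer.normW {V : Type*} [Fintype V] [DecidableEq V] (X : TwoLayer V)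
    {F : Type*} [Zero F] (x : V → F) : ℝ :=
  (∑ v ∈ Finset.univ.filter (fun v => x v ≠ 0), X.wV v) / X.wVSet Finset.univ

/-! If `c ∉ C`, the set `A(c)` is nonempty, so unique neighbor expansion yields `σ ∈ T` meeting it
in exactly one element. The linear dependency `∑ ld(e) (e · c) = 0` supported on `σ` then has
exactly one nonzero summand, which is impossible. -/

theorem card_filter_ne_zero_ne_one_of_sum_eq_zero {ι M : Type*} [AddCommMonoid M]
    {s : Finset ι} {f : ι → M} (hsum : ∑ i ∈ s, f i = 0) :
    (s.filter (fun i => f i ≠ 0)).card ≠ 1 := by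
  intro hcard
  obtain ⟨i, hi⟩ := card_eq_one.1 hcard
  have hmem : i ∈ s.filter (fun i => f i ≠ 0) := by rw [hi]; exact mem_singleton_self i
  rw [← sum_filter_ne_zero, hi, sum_singleton] at hsum
  exact (mem_filter.1 hmem).2 hsum

theorem card_image_filter_inter_ne_one_of_sum_mul_eq_zero {ι β F : Type*} [DecidableEq β]
    [NonUnitalNonAssocSemiring F] [NoZeroDivisors F] {s : Finset ι} {g : ι → β}
    (hg : Set.InjOn g s) {a b : ι → F} (hsum : ∑ i ∈ s, a i * b i = 0) :
    ((s.filter (fun i => a i ≠ 0)).image g ∩ (s.filter (fun i => b i ≠ 0)).image g).card ≠ 1 := by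
  have hsub : (s.filter (fun i => a i ≠ 0) ∪ s.filter (fun i => b i ≠ 0) : Set ι) ⊆ s :=
    Set.union_subset (coe_subset.2 (filter_subset _ _)) (coe_subset.2 (filter_subset _ _))
  have hinter : (s.filter (fun i => a i ≠ 0)).image g ∩ (s.filter (fun i => b i ≠ 0)).image g =
      (s.filter (fun i => a i * b i ≠ 0)).image g := by
    rw [← image_inter_of_injOn _ _ (hg.mono hsub), ← filter_and]
    simp only [mul_ne_zero_iff]
  rw [hinter, card_image_of_injOn (hg.mono (coe_subset.2 (filter_subset _ _)))]
  exact card_filter_ne_zero_ne_one_of_sum_eq_zero hsum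

/-- The set `A(c)` of supports of the constraints in `Ecal` that the word `c` violates. -/
def violatedSupports {V F : Type*} [Fintype V] [DecidableEq V] [NonUnitalNonAssocSemiring F]
    (Ecal : Finset (V → F)) (c : V → F) : Finset (Finset V) :=
  (Ecal.filter (fun e => dotF e c ≠ 0)).image suppF

namespace TwoLayer

variable {V F : Type*} [Fintype V] [DecidableEq V]

/-- `A` is `(δ,α)`-locally small: the `δ`-large vertices carry link weight at most `α · w(A)`. -/
def IsLocallySmall (X : TwoLayer V) (δ α : ℝ) (A : Finset (Finset V)) : Prop :=
  ∑ v ∈ X.VLarge A δ, X.mLkSet v (A ∩ X.Ev v) ≤ α * X.wSet A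

/-- The `((δ,α),ε₀)`-unique neighbor expansion property. -/
def HasUniqueNeighborExpansion (X : TwoLayer V) (δ α ε₀ : ℝ) : Prop :=
  ∀ A ⊆ X.E, A.Nonempty → X.wSet A / X.wSet X.E < ε₀ → X.IsLocallySmall δ α A →
    ∃ σ ∈ X.T, (σ ∩ A).card = 1

variable [NonUnitalNonAssocSemiring F]

/-- The code cut out by the constraints `Ecal` is modelled over `X` via the linear dependencies
`Tcal`, each encoded as its coefficient function on words, of which only the values on `Ecal`
matter. -/
structure IsModelledOver (X : TwoLayer V) (Ecal : Finset (V → F)) (Tcal : Finset ((V → F) → F)) :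
    Prop where
  bijOn_suppF : Set.BijOn suppF (Ecal : Set (V → F)) (X.E : Set (Finset V))
  sum_dependency : ∀ ld ∈ Tcal, ∀ c : V → F, ∑ e ∈ Ecal, ld e * dotF e c = 0
  T_eq : X.T = Tcal.image (fun ld => (Ecal.filter (fun e => ld e ≠ 0)).image suppF)

variable {X : TwoLayer V} {Ecal : Finset (V → F)} {Tcal : Finset ((V → F) → F)}

theorem IsModelledOver.violatedSupports_subset (hX : X.IsModelledOver Ecal Tcal) (c : V → F) :
    violatedSupports Ecal c ⊆ X.E :=
  image_subset_iff.2 fun _ he => hX.bijOn_suppF.mapsTo (mem_filter.1 he).1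

theorem IsModelledOver.card_inter_violatedSupports_ne_one [NoZeroDivisors F]
    (hX : X.IsModelledOver Ecal Tcal) {σ : Finset (Finset V)} (hσ : σ ∈ X.T) (c : V → F) :
    (σ ∩ violatedSupports Ecal c).card ≠ 1 := by
  rw [hX.T_eq] at hσ
  obtain ⟨ld, hld, rfl⟩ := mem_image.1 hσ
  exact card_image_filter_inter_ne_one_of_sum_mul_eq_zero hX.bijOn_suppF.injOn
    (hX.sum_dependency ld hld c)

end TwoLayer

theorem stmt4_general {V F : Type*} [Fintype V] [DecidableEq V] [NonUnitalNonAssocSemiring F]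
    [NoZeroDivisors F] {X : TwoLayer V} {Ecal : Finset (V → F)} {Tcal : Finset ((V → F) → F)}
    (hX : X.IsModelledOver Ecal Tcal) {δ α ε₀ : ℝ} (hune : X.HasUniqueNeighborExpansion δ α ε₀)
    {c : V → F} (hsmall : X.wSet (violatedSupports Ecal c) / X.wSet X.E < ε₀)
    (hls : X.IsLocallySmall δ α (violatedSupports Ecal c)) :
    ∀ e ∈ Ecal, dotF e c = 0 := by
  by_contra! ⟨e, he, hec⟩
  have hne : (violatedSupports Ecal c).Nonempty :=
    ⟨suppF e, mem_image_of_mem suppF (mem_filter.2 ⟨he, hec⟩)⟩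
  obtain ⟨σ, hσ, hcard⟩ := hune _ (hX.violatedSupports_subset c) hne hsmall hls
  exact hX.card_inter_violatedSupports_ne_one hσ c hcard

/-- Lemma 3.4: if `X` has the `((δ,α),ε₀)`-unique neighbor expansion
property and `c ∈ 𝔽_p^V` satisfies `w(A(c))/w(E) ≤ ε` for some `0 < ε < ε₀` with `A(c)`
being `(δ,α)`-locally small, then `c` belongs to the code modelled over `X`. -/
theorem stmt4 {V F : Type*} [Fintype V] [DecidableEq V] [Field F] [Fintype F]
    (X : TwoLayer V)
    (Ecal : Finset (V → F)) (Tcal : Finset ((V → F) → F))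
    (hsupp : ∀ e ∈ Ecal, suppF e ∈ X.E)
    (hinj : ∀ e₁ ∈ Ecal, ∀ e₂ ∈ Ecal, suppF e₁ = suppF e₂ → e₁ = e₂)
    (hsurj : ∀ τ ∈ X.E, ∃ e ∈ Ecal, suppF e = τ)
    (hld : ∀ ld ∈ Tcal, ∀ c : V → F, ∑ e ∈ Ecal, ld e * dotF e c = 0)
    (hT : X.T = Tcal.image (fun ld => (Ecal.filter (fun e => ld e ≠ 0)).image suppF))
    (δ α ε₀ : ℝ)
    (hune : ∀ A ⊆ X.E, A.Nonempty → X.wSet A / X.wSet X.E < ε₀ →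
      (∑ v ∈ X.VLarge A δ, X.mLkSet v (A ∩ X.Ev v)) ≤ α * X.wSet A →
      ∃ σ ∈ X.T, (σ ∩ A).card = 1)
    (c : V → F) (ε : ℝ) (hε : 0 < ε) (hεε₀ : ε < ε₀)
    (hsmall : X.wSet ((Ecal.filter (fun e => dotF e c ≠ 0)).image suppF) / X.wSet X.E ≤ ε)
    (hls : (∑ v ∈ X.VLarge ((Ecal.filter (fun e => dotF e c ≠ 0)).image suppF) δ,
        X.mLkSet v (((Ecal.filter (fun e => dotF e c ≠ 0)).image suppF) ∩ X.Ev v))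
      ≤ α * X.wSet ((Ecal.filter (fun e => dotF e c ≠ 0)).image suppF)) :
    ∀ e ∈ Ecal, dotF e c = 0 :=
  stmt4_general ⟨⟨hsupp, fun e₁ he₁ e₂ he₂ => hinj e₁ he₁ e₂ he₂, hsurj⟩, hld, hT⟩ hune
    (hsmall.trans_lt hεε₀) hls
end
end

section
/- (Cheeger inequality for weighted graphs.) Let (V,E) be a connected finite weighted graph with weight function m, and let λ be such that ⟨Mφ,φ⟩ ≤ λ·‖φ‖² for every φ ∈ ℓ²(V) orthogonal to the constant function (in particular this holds when λ is the second largest eigenvalue of the random walk operator M). Then h_G ≥ 1 − λ. -/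
open Finset

noncomputable section
open scoped Classical

/-!
By the symmetry of `m`, `⟨φ, φ⟩ - ⟨Mφ, φ⟩` is the Dirichlet form `½ Σ m(u, v) (φ u - φ v)²`
(a sum over ordered pairs), which does not change when a constant is added to `φ`. Centring an
arbitrary `f` therefore turns the spectral bound into the Poincaré inequality
`(1 - λ) (‖f‖² - ⟨f, 1⟩² / m(V)) ≤ ½ Σ m(u, v) (f u - f v)²`. For `f = 1_U` the left side is
`(1 - λ) m(U) m(V ∖ U) / m(V)` and the right side is `m(U, V ∖ U)`.
-/

section VertexSets

variable {α : Type*} {m : α → α → ℝ}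

lemma pairW_comm (hsymm : ∀ u v : α, m u v = m v u) (S T : Finset α) :
    pairW m S T = pairW m T S := by
  rw [pairW, sum_comm]
  exact sum_congr rfl fun v _ => sum_congr rfl fun u _ => hsymm u v

lemma vertOn_add_vertOn_sdiff {vs U : Finset α} (hU : U ⊆ vs) :
    vertOn m vs U + vertOn m vs (vs \ U) = vertOn m vs vs := by
  rw [add_comm]
  exact sum_sdiff hU

lemma le_cheegerOn {vs : Finset α} (hvs : vs.Nontrivial) {c : ℝ}
    (hc : ∀ U ⊆ vs, U.Nonempty → U ≠ vs →
      c ≤ pairW m U (vs \ U) * vertOn m vs vs / (vertOn m vs U * vertOn m vs (vs \ U))) :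
    c ≤ cheegerOn m vs := by
  apply le_csInf
  · obtain ⟨v, hv⟩ := hvs.nonempty
    exact ⟨_, {v}, singleton_subset_iff.2 hv, singleton_nonempty v, hvs.ne_singleton.symm, rfl⟩
  · rintro _ ⟨U, hUvs, hU, hne, rfl⟩
    exact hc U hUvs hU hne

end VertexSets

section DirichletForm

variable {α : Type*} [Fintype α] {m : α → α → ℝ}

/-- The Dirichlet form `½ Σ m(u, v) (φ u - φ v)²` of a weighted graph, i.e. the quadratic form of
`1 - M`. The sum runs over ordered pairs, so each edge is counted twice. -/
def dirichletForm (m : α → α → ℝ) (φ : α → ℝ) : ℝ :=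
  (∑ u, ∑ v, m u v * (φ u - φ v) ^ 2) / 2

lemma iprodK_eq_sum_degOn (φ ψ : α → ℝ) :
    iprodK m φ ψ = ∑ v, degOn m univ v * (φ v * ψ v) :=
  rfl

lemma dirichletForm_sub_const (f : α → ℝ) (c : ℝ) :
    dirichletForm m (fun v => f v - c) = dirichletForm m f := by
  simp only [dirichletForm, sub_sub_sub_cancel_right]

lemma iprodK_walkK (hdeg : ∀ v, degOn m univ v ≠ 0) (φ ψ : α → ℝ) :
    iprodK m (walkK m φ) ψ = ∑ u, ∑ v, m u v * (φ v * ψ u) := by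
  refine sum_congr rfl fun u _ => ?_
  rw [walkK, ← mul_assoc, mul_div_cancel₀ (b := ∑ v, m u v) _ (hdeg u), sum_mul]
  simp only [mul_assoc]

lemma iprodK_self_sub_iprodK_walkK_self (hsymm : ∀ u v : α, m u v = m v u)
    (hdeg : ∀ v, degOn m univ v ≠ 0) (φ : α → ℝ) :
    iprodK m φ φ - iprodK m (walkK m φ) φ = dirichletForm m φ := by
  have norm_first : iprodK m φ φ = ∑ u, ∑ v, m u v * φ u ^ 2 := by
    simp only [iprodK, sum_mul, sq]
  have norm_second : iprodK m φ φ = ∑ u, ∑ v, m u v * φ v ^ 2 := by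
    rw [norm_first, sum_comm]
    exact sum_congr rfl fun v _ => sum_congr rfl fun u _ => by rw [hsymm]
  have expand : ∑ u, ∑ v, m u v * (φ u - φ v) ^ 2 =
      iprodK m φ φ + iprodK m φ φ - 2 * iprodK m (walkK m φ) φ := by
    nth_rewrite 1 [norm_first]
    rw [norm_second, iprodK_walkK hdeg]
    simp only [mul_sum, ← sum_add_distrib, ← sum_sub_distrib]
    exact sum_congr rfl fun u _ => sum_congr rfl fun v _ => by ring
  rw [dirichletForm, expand]
  ring

lemma iprodK_sub_const_one (f : α → ℝ) (c : ℝ) :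
    iprodK m (fun v => f v - c) (fun _ => 1) =
      iprodK m f (fun _ => 1) - c * vertOn m univ univ := by
  simp only [iprodK_eq_sum_degOn, vertOn, mul_sum, ← sum_sub_distrib]
  exact sum_congr rfl fun v _ => by ring

lemma iprodK_sub_const_self (f : α → ℝ) (c : ℝ) :
    iprodK m (fun v => f v - c) (fun v => f v - c) =
      iprodK m f f - 2 * c * iprodK m f (fun _ => 1) + c ^ 2 * vertOn m univ univ := by
  simp only [iprodK_eq_sum_degOn, vertOn, mul_sum, ← sum_sub_distrib, ← sum_add_distrib]
  exact sum_congr rfl fun v _ => by ring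

lemma poincare_of_iprodK_walkK_le (hsymm : ∀ u v : α, m u v = m v u)
    (hdeg : ∀ v, degOn m univ v ≠ 0) (hvol : vertOn m univ univ ≠ 0) {lam : ℝ}
    (hspec : ∀ φ : α → ℝ, iprodK m φ (fun _ => 1) = 0 →
      iprodK m (walkK m φ) φ ≤ lam * iprodK m φ φ) (f : α → ℝ) :
    (1 - lam) * (iprodK m f f - iprodK m f (fun _ => 1) ^ 2 / vertOn m univ univ) ≤
      dirichletForm m f := by
  set mean := iprodK m f (fun _ => 1) / vertOn m univ univ with mean_def
  set φ : α → ℝ := fun v => f v - mean with φ_def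
  have orthogonal : iprodK m φ (fun _ => 1) = 0 := by
    rw [φ_def, iprodK_sub_const_one, mean_def, div_mul_cancel₀ _ hvol, sub_self]
  have norm_sq : iprodK m φ φ =
      iprodK m f f - iprodK m f (fun _ => 1) ^ 2 / vertOn m univ univ := by
    rw [φ_def, iprodK_sub_const_self, mean_def]
    field_simp
    ring
  calc
    _ = iprodK m φ φ - lam * iprodK m φ φ := by rw [← norm_sq, sub_mul, one_mul]
    _ ≤ iprodK m φ φ - iprodK m (walkK m φ) φ := sub_le_sub_left (hspec φ orthogonal) _
    _ = dirichletForm m f := by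
      rw [iprodK_self_sub_iprodK_walkK_self hsymm hdeg, φ_def, dirichletForm_sub_const]

end DirichletForm

section Cut

variable {α : Type*} [Fintype α] {m : α → α → ℝ}

lemma iprodK_indicator_one (U : Finset α) :
    iprodK m ((U : Set α).indicator 1) (fun _ => 1) = vertOn m univ U := by
  simp [iprodK_eq_sum_degOn, vertOn, Set.indicator_apply]

lemma iprodK_indicator_self (U : Finset α) :
    iprodK m ((U : Set α).indicator 1) ((U : Set α).indicator 1) = vertOn m univ U := by
  simp [iprodK_eq_sum_degOn, vertOn, Set.indicator_apply]

lemma pairW_eq_sum_indicator (S T : Finset α) :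
    pairW m S T =
      ∑ u, ∑ v, m u v * ((S : Set α).indicator 1 u * (T : Set α).indicator 1 v) := by
  simp only [mul_left_comm (m _ _), ← mul_sum]
  simp [pairW, Set.indicator_apply]

lemma dirichletForm_indicator (hsymm : ∀ u v : α, m u v = m v u) (U : Finset α) :
    dirichletForm m ((U : Set α).indicator 1) = pairW m U (univ \ U) := by
  have crossing : ∑ u, ∑ v, m u v * ((U : Set α).indicator 1 u - (U : Set α).indicator 1 v) ^ 2 =
      pairW m U (univ \ U) + pairW m (univ \ U) U := by
    simp only [pairW_eq_sum_indicator, ← sum_add_distrib, ← mul_add]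
    refine sum_congr rfl fun u _ => sum_congr rfl fun v _ => ?_
    by_cases hu : u ∈ U <;> by_cases hv : v ∈ U <;> simp [hu, hv]
  rw [dirichletForm, crossing, pairW_comm hsymm (univ \ U) U, add_self_div_two]

lemma one_sub_le_cut_ratio (hsymm : ∀ u v : α, m u v = m v u)
    (hdeg : ∀ v, 0 < degOn m univ v) {lam : ℝ}
    (hspec : ∀ φ : α → ℝ, iprodK m φ (fun _ => 1) = 0 →
      iprodK m (walkK m φ) φ ≤ lam * iprodK m φ φ)
    {U : Finset α} (hU : U.Nonempty) (hne : U ≠ univ) :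
    1 - lam ≤ pairW m U (univ \ U) * vertOn m univ univ /
      (vertOn m univ U * vertOn m univ (univ \ U)) := by
  have inside_pos : 0 < vertOn m univ U := sum_pos (fun v _ => hdeg v) hU
  have outside_pos : 0 < vertOn m univ (univ \ U) :=
    sum_pos (fun v _ => hdeg v) (sdiff_nonempty.2 fun h => hne (univ_subset_iff.1 h))
  have vol_eq : vertOn m univ U + vertOn m univ (univ \ U) = vertOn m univ univ :=
    vertOn_add_vertOn_sdiff (subset_univ U)
  have vol_pos : 0 < vertOn m univ univ := by linarith
  have variance_eq : vertOn m univ U - vertOn m univ U ^ 2 / vertOn m univ univ =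
      vertOn m univ U * vertOn m univ (univ \ U) / vertOn m univ univ := by
    rw [eq_sub_of_add_eq' vol_eq]
    field_simp
  have poincare := poincare_of_iprodK_walkK_le hsymm (fun v => (hdeg v).ne') vol_pos.ne' hspec
    ((U : Set α).indicator 1)
  rw [iprodK_indicator_self, iprodK_indicator_one, dirichletForm_indicator hsymm, variance_eq,
    ← mul_div_assoc, div_le_iff₀ vol_pos] at poincare
  exact (le_div_iff₀ (mul_pos inside_pos outside_pos)).2 poincare

end Cut

lemma degOn_univ_pos_of_connected {α : Type*} [Fintype α] [Nontrivial α] {m : α → α → ℝ}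
    (hsymm : ∀ u v : α, m u v = m v u) (hnonneg : ∀ u v : α, 0 ≤ m u v)
    (hconn : (SimpleGraph.fromRel (fun u v => m u v ≠ 0)).Connected) (v : α) :
    0 < degOn m univ v := by
  obtain ⟨w, hvw⟩ := hconn.preconnected.exists_adj_of_nontrivial v
  have hne : m v w ≠ 0 := by
    simpa only [hsymm w v, or_self] using ((SimpleGraph.fromRel_adj _ _ _).1 hvw).2
  exact sum_pos' (fun u _ => hnonneg v u) ⟨w, mem_univ w, (hnonneg v w).lt_of_ne' hne⟩

theorem stmt9_general {α : Type*} [Fintype α] [Nontrivial α] (m : α → α → ℝ)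
    (hsymm : ∀ u v : α, m u v = m v u) (hdeg : ∀ v : α, 0 < degOn m univ v) (lam : ℝ)
    (hspec : ∀ φ : α → ℝ, iprodK m φ (fun _ => 1) = 0 →
      iprodK m (walkK m φ) φ ≤ lam * iprodK m φ φ) :
    1 - lam ≤ cheegerOn m univ :=
  le_cheegerOn univ_nontrivial fun _ _ hU hne => one_sub_le_cut_ratio hsymm hdeg hspec hU hne

/-- Theorem 4.4(1), Cheeger inequality for weighted graphs: if
`⟨Mφ,φ⟩ ≤ λ‖φ‖²` for every `φ` orthogonal to the constants, then `h_G ≥ 1 - λ`. -/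
theorem stmt9 {α : Type*} [Fintype α] [DecidableEq α] [Nontrivial α] (m : α → α → ℝ)
    (hsymm : ∀ u v : α, m u v = m v u) (hnonneg : ∀ u v : α, 0 ≤ m u v)
    (hdiag : ∀ v : α, m v v = 0)
    (hconn : (SimpleGraph.fromRel (fun u v => m u v ≠ 0)).Connected)
    (lam : ℝ)
    (hspec : ∀ φ : α → ℝ, iprodK m φ (fun _ => 1) = 0 →
      iprodK m (walkK m φ) φ ≤ lam * iprodK m φ φ) :
    1 - lam ≤ cheegerOn m Finset.univ :=
  stmt9_general m hsymm (degOn_univ_pos_of_connected hsymm hnonneg hconn) lam hspec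
end
end

section
/- (Sampling in bipartite graphs.) Let (V,E) be a connected finite bipartite weighted graph with V = V₁ ∪ V₂ and weight function m, and let λ be such that ‖Mφ‖ ≤ λ·‖φ‖ for every φ ∈ ℓ²(V) orthogonal to both indicator functions 𝟙_{V₁} and 𝟙_{V₂} (in particular this holds for λ the spectral expansion of the graph). Fix a nonempty U ⊆ V₁ and let N(U) = {v ∈ V₂ : ∃ u ∈ U, {u,v} ∈ E}. For 0 < α < 1 let N(U)_{≥α} be the set of v ∈ N(U) such that | m({{u,v} : u ∈ U})/m(v) − m(U)/m(V₁) | ≥ α. Then m(N(U)_{≥α}) ≤ (λ²/α²)·m(U). -/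
open Finset

noncomputable section
open scoped Classical

/-!
Let `c = m(U) / m(V₁)` and `φ = 𝟙_U - c 𝟙_{V₁}`. Then `φ` is orthogonal to `𝟙_{V₁}` and `𝟙_{V₂}`,
and `‖φ‖² = (1 - c) m(U) ≤ m(U)`. All neighbours of a vertex `v ∈ V₂` lie in `V₁`, so `Mφ(v)` is
exactly the deviation `m({{u,v} : u ∈ U}) / m(v) - c`. The spectral hypothesis bounds `‖Mφ‖²` by
`λ² m(U)`, and Chebyshev's inequality turns this into a bound on the weight of the set where
`|Mφ| ≥ α`.
-/

section WeightedGraph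

variable {α : Type*} {m : α → α → ℝ}

lemma degOn_nonneg (hnonneg : ∀ u v, 0 ≤ m u v) (vs : Finset α) (v : α) : 0 ≤ degOn m vs v :=
  sum_nonneg fun u _ => hnonneg v u

lemma vertOn_nonneg (hnonneg : ∀ u v, 0 ≤ m u v) (vs U : Finset α) : 0 ≤ vertOn m vs U :=
  sum_nonneg fun v _ => degOn_nonneg hnonneg vs v

lemma vertOn_mono (hnonneg : ∀ u v, 0 ≤ m u v) (vs : Finset α) {U W : Finset α} (hUW : U ⊆ W) :
    vertOn m vs U ≤ vertOn m vs W :=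
  sum_le_sum_of_subset_of_nonneg hUW fun v _ _ => degOn_nonneg hnonneg vs v

lemma vertOn_div_mul_cancel (hnonneg : ∀ u v, 0 ≤ m u v) (vs : Finset α) {U W : Finset α}
    (hUW : U ⊆ W) : vertOn m vs U / vertOn m vs W * vertOn m vs W = vertOn m vs U :=
  div_mul_cancel_of_imp fun hW =>
    le_antisymm (hW ▸ vertOn_mono hnonneg vs hUW) (vertOn_nonneg hnonneg vs U)

variable [Fintype α]

-- Chebyshev's inequality; vertices of degree zero carry no weight, so `ψ` is arbitrary there.
lemma vertOn_le_iprodK_self_div_sq (hnonneg : ∀ u v, 0 ≤ m u v) {ψ : α → ℝ} {a : ℝ} (ha : 0 < a)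
    {T : Finset α} (hT : ∀ v ∈ T, degOn m univ v ≠ 0 → a ≤ |ψ v|) :
    vertOn m univ T ≤ iprodK m ψ ψ / a ^ 2 := by
  rw [le_div_iff₀ (by positivity), vertOn, sum_mul]
  have hterm : ∀ v ∈ T, degOn m univ v * a ^ 2 ≤ degOn m univ v * (ψ v * ψ v) := by
    intro v hv
    rcases eq_or_ne (degOn m univ v) 0 with hdeg | hdeg
    · simp [hdeg]
    · have hsq : a ^ 2 ≤ ψ v * ψ v := by
        simpa [← sq] using pow_le_pow_left₀ ha.le (hT v hv hdeg) 2
      exact mul_le_mul_of_nonneg_left hsq (degOn_nonneg hnonneg univ v)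
  calc ∑ v ∈ T, degOn m univ v * a ^ 2
      ≤ ∑ v ∈ T, degOn m univ v * (ψ v * ψ v) := sum_le_sum hterm
    _ ≤ ∑ v, degOn m univ v * (ψ v * ψ v) :=
        sum_le_sum_of_subset_of_nonneg (subset_univ T) fun v _ _ =>
          mul_nonneg (degOn_nonneg hnonneg univ v) (mul_self_nonneg (ψ v))

variable [DecidableEq α]

lemma iprodK_indicator (φ : α → ℝ) (S : Finset α) :
    iprodK m φ (fun v => if v ∈ S then 1 else 0) = ∑ v ∈ S, degOn m univ v * φ v := by
  simp [iprodK, degOn]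

/-- The function `𝟙_U - (m(U) / m(W)) 𝟙_W`; for `U ⊆ W` it is the component of `𝟙_U` orthogonal
to `𝟙_W` in `ℓ²`. -/
def centeredIndicator (m : α → α → ℝ) (W U : Finset α) (v : α) : ℝ :=
  (if v ∈ U then 1 else 0) - vertOn m univ U / vertOn m univ W * (if v ∈ W then 1 else 0)

variable {U W : Finset α}

lemma iprodK_centeredIndicator_indicator (hnonneg : ∀ u v, 0 ≤ m u v) (hUW : U ⊆ W) :
    iprodK m (centeredIndicator m W U) (fun v => if v ∈ W then 1 else 0) = 0 := by
  set c := vertOn m univ U / vertOn m univ W with hc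
  have hU : ∑ v ∈ W, degOn m univ v * (if v ∈ U then 1 else 0) = vertOn m univ U := by
    simp [vertOn, inter_eq_right.2 hUW]
  calc iprodK m (centeredIndicator m W U) (fun v => if v ∈ W then 1 else 0)
      = ∑ v ∈ W, degOn m univ v * ((if v ∈ U then 1 else 0) - c) := by
        rw [iprodK_indicator]
        exact sum_congr rfl fun v hv => by simp [centeredIndicator, hv, hc]
    _ = vertOn m univ U - c * vertOn m univ W := by
        simp only [mul_sub, sum_sub_distrib, hU, ← sum_mul, mul_comm c, vertOn]
    _ = 0 := by rw [vertOn_div_mul_cancel hnonneg univ hUW, sub_self]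

lemma iprodK_centeredIndicator_indicator_compl (hUW : U ⊆ W) :
    iprodK m (centeredIndicator m W U) (fun v => if v ∈ W then 0 else 1) = 0 := by
  refine sum_eq_zero fun v _ => ?_
  by_cases hW : v ∈ W
  · simp [hW]
  · have hU : v ∉ U := fun h => hW (hUW h)
    simp [centeredIndicator, hU, hW]

-- Pythagoras: `⟨φ, φ⟩ = ⟨φ, 𝟙_U⟩` for the centered indicator `φ`, since `φ ⊥ 𝟙_W`.
lemma iprodK_centeredIndicator_self (hnonneg : ∀ u v, 0 ≤ m u v) (hUW : U ⊆ W) :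
    iprodK m (centeredIndicator m W U) (centeredIndicator m W U) =
      (1 - vertOn m univ U / vertOn m univ W) * vertOn m univ U := by
  set φ := centeredIndicator m W U with hφ
  set c := vertOn m univ U / vertOn m univ W with hc
  have hφU : ∀ v ∈ U, φ v = 1 - c := fun v hv => by simp [hφ, hc, centeredIndicator, hv, hUW hv]
  calc iprodK m φ φ
      = iprodK m φ (fun v => if v ∈ U then 1 else 0)
          - c * iprodK m φ (fun v => if v ∈ W then 1 else 0) := by
        simp only [iprodK, mul_sum, ← sum_sub_distrib]
        refine sum_congr rfl fun v _ => ?_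
        have hv : φ v = (if v ∈ U then 1 else 0) - c * (if v ∈ W then 1 else 0) := rfl
        linear_combination (∑ u, m v u) * φ v * hv
    _ = ∑ v ∈ U, degOn m univ v * φ v := by
        rw [iprodK_centeredIndicator_indicator hnonneg hUW, mul_zero, sub_zero, iprodK_indicator]
    _ = (1 - c) * vertOn m univ U := by
        rw [vertOn, mul_sum]
        exact sum_congr rfl fun v hv => by rw [hφU v hv, mul_comm]

lemma iprodK_centeredIndicator_self_le (hnonneg : ∀ u v, 0 ≤ m u v) (hUW : U ⊆ W) :
    iprodK m (centeredIndicator m W U) (centeredIndicator m W U) ≤ vertOn m univ U := by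
  have hU : 0 ≤ vertOn m univ U := vertOn_nonneg hnonneg univ U
  have hc : 0 ≤ vertOn m univ U / vertOn m univ W := div_nonneg hU (vertOn_nonneg hnonneg univ W)
  rw [iprodK_centeredIndicator_self hnonneg hUW]
  exact mul_le_of_le_one_left hU (sub_le_self 1 hc)

lemma walkK_centeredIndicator {v : α} (hv : ∀ u ∉ W, m v u = 0) (hdeg : degOn m univ v ≠ 0) :
    walkK m (centeredIndicator m W U) v =
      (∑ u ∈ U, m v u) / degOn m univ v - vertOn m univ U / vertOn m univ W := by
  set c := vertOn m univ U / vertOn m univ W with hc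
  have hsum : ∑ u, m v u * centeredIndicator m W U u =
      ∑ u ∈ U, m v u - c * degOn m univ v := by
    have hdegW : ∑ u ∈ W, m v u = degOn m univ v :=
      sum_subset (subset_univ W) fun u _ hu => hv u hu
    simp [centeredIndicator, mul_sub, sum_sub_distrib, ← hdegW, ← sum_mul, mul_comm, ← hc]
  change (∑ u, m v u * centeredIndicator m W U u) / degOn m univ v = _
  rw [hsum, sub_div, mul_div_cancel_right₀ c hdeg]

end WeightedGraph

theorem stmt17_general {α : Type*} [Fintype α] [DecidableEq α] (m : α → α → ℝ)
    (hsymm : ∀ u v : α, m u v = m v u) (hnonneg : ∀ u v : α, 0 ≤ m u v)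
    (V₁ : Finset α) (hindep : ∀ u ∉ V₁, ∀ v ∉ V₁, m u v = 0)
    (lam : ℝ)
    (hspec : ∀ φ : α → ℝ,
      iprodK m φ (fun v => if v ∈ V₁ then 1 else 0) = 0 →
      iprodK m φ (fun v => if v ∈ V₁ then 0 else 1) = 0 →
      iprodK m (walkK m φ) (walkK m φ) ≤ lam ^ 2 * iprodK m φ φ)
    (U : Finset α) (hUV : U ⊆ V₁) (a : ℝ) (ha : 0 < a) :
    vertOn m univ ((univ \ V₁).filter fun v =>
        a ≤ |(∑ u ∈ U, m u v) / degOn m univ v - vertOn m univ U / vertOn m univ V₁|)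
      ≤ lam ^ 2 / a ^ 2 * vertOn m univ U := by
  set φ := centeredIndicator m V₁ U
  have hnorm : iprodK m (walkK m φ) (walkK m φ) ≤ lam ^ 2 * vertOn m univ U :=
    calc iprodK m (walkK m φ) (walkK m φ)
        ≤ lam ^ 2 * iprodK m φ φ := hspec φ (iprodK_centeredIndicator_indicator hnonneg hUV)
          (iprodK_centeredIndicator_indicator_compl hUV)
      _ ≤ lam ^ 2 * vertOn m univ U := by
          gcongr
          exact iprodK_centeredIndicator_self_le hnonneg hUV
  calc _ ≤ iprodK m (walkK m φ) (walkK m φ) / a ^ 2 := by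
        refine vertOn_le_iprodK_self_div_sq hnonneg ha fun v hv hdeg => ?_
        obtain ⟨hvV, hdev⟩ := mem_filter.1 hv
        rw [walkK_centeredIndicator (hindep v (mem_sdiff.1 hvV).2) hdeg]
        simpa only [hsymm v] using hdev
    _ ≤ lam ^ 2 * vertOn m univ U / a ^ 2 := by gcongr
    _ = lam ^ 2 / a ^ 2 * vertOn m univ U := by rw [div_mul_eq_mul_div]

/-- Lemma 7.8, sampling in bipartite graphs. -/
theorem stmt17 {α : Type*} [Fintype α] [DecidableEq α] (m : α → α → ℝ)
    (hsymm : ∀ u v : α, m u v = m v u) (hnonneg : ∀ u v : α, 0 ≤ m u v)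
    (hdiag : ∀ v : α, m v v = 0)
    (V₁ : Finset α)
    (hbip : ∀ u v : α, m u v ≠ 0 → (u ∈ V₁ ↔ v ∉ V₁))
    (hconn : (SimpleGraph.fromRel (fun u v => m u v ≠ 0)).Connected)
    (lam : ℝ) (hlam : 0 ≤ lam)
    (hspec : ∀ φ : α → ℝ,
      iprodK m φ (fun v => if v ∈ V₁ then 1 else 0) = 0 →
      iprodK m φ (fun v => if v ∈ V₁ then 0 else 1) = 0 →
      iprodK m (walkK m φ) (walkK m φ) ≤ lam ^ 2 * iprodK m φ φ)
    (U : Finset α) (hUV : U ⊆ V₁) (hU : U.Nonempty)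
    (a : ℝ) (ha0 : 0 < a) (ha1 : a < 1) :
    vertOn m Finset.univ
        (((Finset.univ \ V₁).filter (fun v => ∃ u ∈ U, m u v ≠ 0)).filter (fun v =>
          a ≤ |(∑ u ∈ U, m u v) / degOn m Finset.univ v -
                vertOn m Finset.univ U / vertOn m Finset.univ V₁|))
      ≤ lam ^ 2 / a ^ 2 * vertOn m Finset.univ U := by
  have hindep : ∀ u ∉ V₁, ∀ v ∉ V₁, m u v = 0 := fun u hu v hv =>
    by_contra fun huv => hu ((hbip u v huv).2 hv)
  exact (vertOn_mono hnonneg univ (filter_subset_filter _ (filter_subset _ _))).trans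
    (stmt17_general m hsymm hnonneg V₁ hindep lam hspec U hUV a ha0)
end
end
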